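/- arXiv:1908.00811 — 4 statements merged into one kernel-verified Lean document; each statement's English description precedes it below -/
import Mathlib

section
/- The amount-to-distribute function TD is continuous on [0,1]×[0,1] and nondecreasing with respect to each of its arguments α and ρ. Moreover, for each fixed ρ ∈ (0,1], the map α ↦ TD(α,ρ) is affine; it is constant if m = b, and it is strictly increasing if m ≠ b. -/
/-!
Put `x = g + LGL α`. Since `max (b - m) 0 + max (m - b) 0 = |m - b|`, we have
`LGL α = |m - b| * α - max (b - m) 0`, and `TD = F + ρ * P + (ρ * x - (1 - ρ) * max (-x) 0)`.
The last bracket is nondecreasing in `x` with slope at least `ρ`, which gives (strict)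
monotonicity in `α`; monotonicity in `ρ` holds because the coefficient of `ρ` is
`P + max x 0 ≥ 0`. For affinity, the sign condition on `g` makes `g` and `LGL α` have the sign
of `m - b` for every `α ∈ [0,1]`, so `max (-x) 0` is always on the same linear branch.
-/

/-- The map `x ↦ ρ * x - (1 - ρ) * max (-x) 0` has slope at least `ρ`. -/
lemma slope_bound {ρ x y : ℝ} (hρ : ρ ≤ 1) (hxy : x ≤ y) :
    ρ * (y - x) ≤ (ρ * y - (1 - ρ) * max (-y) 0) - (ρ * x - (1 - ρ) * max (-x) 0) := by
  have h : max (-y) 0 ≤ max (-x) 0 := max_le_max_right 0 (neg_le_neg hxy)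
  nlinarith [mul_le_mul_of_nonneg_left h (sub_nonneg.2 hρ)]

/-- The amount-to-distribute function `TD` is continuous on `[0,1] × [0,1]`
and nondecreasing with respect to each of its arguments `α` and `ρ`. Moreover, for each
fixed `ρ ∈ (0,1]`, the map `α ↦ TD(α,ρ)` is affine; it is constant if `m = b`, and it is
strictly increasing if `m ≠ b`. -/
theorem stmt_0 (m b g P F : ℝ) (hg : 0 ≤ g * (m - b)) (hP : 0 ≤ P)
    (LGL : ℝ → ℝ)
    (hLGL : ∀ α, LGL α = -(1 - α) * max (b - m) 0 + α * max (m - b) 0)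
    (TD : ℝ → ℝ → ℝ)
    (hTD : ∀ α ρ, TD α ρ = F + ρ * (P + g + LGL α) - (1 - ρ) * max (-(g + LGL α)) 0) :
    ContinuousOn (fun p : ℝ × ℝ => TD p.1 p.2) (Set.Icc 0 1 ×ˢ Set.Icc 0 1) ∧
    (∀ ρ ∈ Set.Icc (0:ℝ) 1, ∀ α₁ ∈ Set.Icc (0:ℝ) 1, ∀ α₂ ∈ Set.Icc (0:ℝ) 1,
      α₁ ≤ α₂ → TD α₁ ρ ≤ TD α₂ ρ) ∧
    (∀ α ∈ Set.Icc (0:ℝ) 1, ∀ ρ₁ ∈ Set.Icc (0:ℝ) 1, ∀ ρ₂ ∈ Set.Icc (0:ℝ) 1,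
      ρ₁ ≤ ρ₂ → TD α ρ₁ ≤ TD α ρ₂) ∧
    (∀ ρ ∈ Set.Ioc (0:ℝ) 1, ∃ a c : ℝ, ∀ α ∈ Set.Icc (0:ℝ) 1, TD α ρ = a * α + c) ∧
    (∀ ρ ∈ Set.Ioc (0:ℝ) 1, m = b →
      ∀ α₁ ∈ Set.Icc (0:ℝ) 1, ∀ α₂ ∈ Set.Icc (0:ℝ) 1, TD α₁ ρ = TD α₂ ρ) ∧
    (∀ ρ ∈ Set.Ioc (0:ℝ) 1, m ≠ b → StrictMonoOn (fun α => TD α ρ) (Set.Icc 0 1)) := by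
  have hL : ∀ α, LGL α = |m - b| * α - max (b - m) 0 := by
    intro α
    rw [hLGL]
    rcases le_total b m with h | h
    · rw [abs_of_nonneg (by linarith), max_eq_right (by linarith : b - m ≤ 0),
        max_eq_left (by linarith : 0 ≤ m - b)]
      ring
    · rw [abs_of_nonpos (by linarith), max_eq_left (by linarith : 0 ≤ b - m),
        max_eq_right (by linarith : m - b ≤ 0)]
      ring
  have key : ∀ ρ ≤ (1 : ℝ), ∀ α₁ α₂, α₁ ≤ α₂ →
      ρ * (|m - b| * (α₂ - α₁)) ≤ TD α₂ ρ - TD α₁ ρ := by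
    intro ρ hρ α₁ α₂ h
    have h1 : |m - b| * α₁ ≤ |m - b| * α₂ := mul_le_mul_of_nonneg_left h (abs_nonneg _)
    have h2 := slope_bound hρ (x := g + LGL α₁) (y := g + LGL α₂) (by rw [hL, hL]; linarith)
    have h3 : g + LGL α₂ - (g + LGL α₁) = |m - b| * (α₂ - α₁) := by rw [hL, hL]; ring
    rw [h3] at h2
    rw [hTD, hTD]
    linarith
  refine ⟨?_, ?_, ?_, ?_, ?_, ?_⟩
  · simp only [hTD, hLGL]
    fun_prop
  · intro ρ hρ α₁ _ α₂ _ h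
    have h0 : 0 ≤ ρ * (|m - b| * (α₂ - α₁)) :=
      mul_nonneg hρ.1 (mul_nonneg (abs_nonneg _) (sub_nonneg.2 h))
    linarith [key ρ hρ.2 α₁ α₂ h]
  · intro α _ ρ₁ _ ρ₂ _ h
    rw [hTD, hTD]
    have h1 : 0 ≤ P + g + LGL α + max (-(g + LGL α)) 0 := by
      linarith [le_max_left (-(g + LGL α)) 0]
    nlinarith [mul_nonneg (sub_nonneg.2 h) h1]
  · intro ρ _
    rcases lt_trichotomy m b with h | h | h
    · -- here `x ≤ 0`, so `TD = F + ρ * P + x`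
      have hg0 : g ≤ 0 := by
        by_contra! hc
        nlinarith
      refine ⟨b - m, F + ρ * P + g - (b - m), fun α hα => ?_⟩
      have hl : LGL α = (b - m) * α - (b - m) := by
        rw [hL, abs_of_neg (by linarith), max_eq_left (by linarith)]
        ring
      have hx : g + LGL α ≤ 0 := by
        rw [hl]
        nlinarith [hα.2]
      rw [hTD, max_eq_left (by linarith), hl]
      ring
    · refine ⟨0, TD 0 ρ, fun α _ => ?_⟩
      have hl : LGL α = LGL 0 := by simp [hL, h]
      rw [hTD, hTD, hl]
      ring
    · -- here `x ≥ 0`, so `TD = F + ρ * (P + x)`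
      have hg0 : 0 ≤ g := by
        by_contra! hc
        nlinarith
      refine ⟨ρ * (m - b), F + ρ * (P + g), fun α hα => ?_⟩
      have hl : LGL α = (m - b) * α := by
        rw [hL, abs_of_pos (by linarith), max_eq_right (by linarith)]
        ring
      have hx : 0 ≤ g + LGL α := by
        rw [hl]
        nlinarith [hα.1]
      rw [hTD, max_eq_right (by linarith), hl]
      ring
  · intro ρ _ h α₁ _ α₂ _
    have hl : LGL α₁ = LGL α₂ := by simp [hL, h]
    rw [hTD, hTD, hl]
  · intro ρ hρ h α₁ _ α₂ _ hlt
    have h0 : 0 < ρ * (|m - b| * (α₂ - α₁)) :=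
      mul_pos hρ.1 (mul_pos (abs_pos.2 (sub_ne_zero.2 h)) (sub_pos.2 hlt))
    change TD α₁ ρ < TD α₂ ρ
    linarith [key ρ hρ.2 α₁ α₂ hlt.le]
end

section
/- The realized capital gain or loss on equity and the post-reallocation latent gain or loss have the same sign: CGL·(MV − BV₁) ≥ 0, where MV = φ₁·S is the market value of the equity position after reallocation. -/
/-!
A purchase realizes no gain, so the product vanishes. A sale leaves the book value per share
unchanged, so the realized and the latent gain are the multiples `φ₀ - φ₁ ≥ 0` and `φ₁ > 0` of the
same per-share gain `S - BV₀ / φ₀`, and their product is a nonnegative multiple of its square.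
-/

/-- The realized capital gain or loss on equity and the post-reallocation
latent gain or loss have the same sign: `CGL·(MV − BV₁) ≥ 0`, where `MV = φ₁·S` is the
market value of the equity position after reallocation. -/
theorem stmt_1 (φ₀ φ₁ S BV₀ : ℝ) (hφ₀ : 0 < φ₀) (hφ₁ : 0 < φ₁) (hS : 0 < S)
    (hBV₀ : 0 ≤ BV₀) (Δφ BV₁ CGL MV : ℝ)
    (hΔφ : Δφ = φ₁ - φ₀)
    (hBV₁ : BV₁ = BV₀ + max Δφ 0 * S - (max (-Δφ) 0 / φ₀) * BV₀)
    (hCGL : CGL = max (-Δφ) 0 * (S - BV₀ / φ₀))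
    (hMV : MV = φ₁ * S) :
    0 ≤ CGL * (MV - BV₁) := by
  rcases le_total 0 Δφ with h | h
  -- A purchase realizes nothing.
  · have h0 : CGL = 0 := by rw [hCGL, max_eq_right (by linarith), zero_mul]
    rw [h0, zero_mul]
  -- On a sale, book value scales with quantity: `BV₁ = φ₁ * (BV₀ / φ₀)`.
  · have hlat : MV - BV₁ = φ₁ * (S - BV₀ / φ₀) := by
      rw [hMV, hBV₁, max_eq_right h, max_eq_left (by linarith), hΔφ]
      field_simp
      ring
    have hprod : CGL * (MV - BV₁) = -Δφ * φ₁ * (S - BV₀ / φ₀) ^ 2 := by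
      rw [hlat, hCGL, max_eq_left (by linarith)]
      ring
    rw [hprod]
    have hneg : 0 ≤ -Δφ := by linarith
    exact mul_nonneg (mul_nonneg hneg hφ₁.le) (sq_nonneg _)
end

section
/- In Case B, i.e. when π·TD(0,ρ̄) < M ≤ π·TD(1,ρ̄), one has m ≠ b and TD(1,ρ̄) > TD(0,ρ̄), and the value α* = (M/π − TD(0,ρ̄)) / (TD(1,ρ̄) − TD(0,ρ̄)) belongs to (0,1] and is the unique α ∈ [0,1] satisfying π·TD(α,ρ̄) = M. -/
/-!
Since `g` has the sign of `m - b`, the quantity `g + LGL α` keeps a constant sign for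
`α ∈ [0,1]`: it is nonnegative if `b ≤ m` and nonpositive if `m ≤ b`. On each side the positive
part in `TD` is therefore linear, so `α ↦ TD α ρ̄` is affine on `[0,1]`. Case B forces a positive
slope, and `αstar` is the solution of the resulting affine equation.
-/

/-- In Case B, i.e. when `π·TD(0,ρ̄) < M ≤ π·TD(1,ρ̄)`, one has `m ≠ b`
and `TD(1,ρ̄) > TD(0,ρ̄)`, and the value
`α* = (M/π − TD(0,ρ̄)) / (TD(1,ρ̄) − TD(0,ρ̄))` belongs to `(0,1]` and is the unique
`α ∈ [0,1]` satisfying `π·TD(α,ρ̄) = M`. -/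
theorem stmt_10 (m b g P F : ℝ) (hg : 0 ≤ g * (m - b)) (hP : 0 ≤ P)
    (LGL : ℝ → ℝ)
    (hLGL : ∀ α, LGL α = -(1 - α) * max (b - m) 0 + α * max (m - b) 0)
    (TD : ℝ → ℝ → ℝ)
    (hTD : ∀ α ρ, TD α ρ = F + ρ * (P + g + LGL α) - (1 - ρ) * max (-(g + LGL α)) 0)
    (ρb pr RG Rcomp M : ℝ) (hρb : ρb ∈ Set.Ioc (0:ℝ) 1) (hpr : pr ∈ Set.Ioc (0:ℝ) 1)
    (hM : M = max RG Rcomp)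
    (hcaseB : pr * TD 0 ρb < M ∧ M ≤ pr * TD 1 ρb)
    (αstar : ℝ)
    (hαstar : αstar = (M / pr - TD 0 ρb) / (TD 1 ρb - TD 0 ρb)) :
    m ≠ b ∧ TD 0 ρb < TD 1 ρb ∧ αstar ∈ Set.Ioc (0:ℝ) 1 ∧
      pr * TD αstar ρb = M ∧
      ∀ α ∈ Set.Icc (0:ℝ) 1, pr * TD α ρb = M → α = αstar := by
  obtain ⟨hpr0, -⟩ := hpr
  obtain ⟨hlo, hhi⟩ := hcaseB
  have hlt : TD 0 ρb < TD 1 ρb := lt_of_mul_lt_mul_left (hlo.trans_le hhi) hpr0.le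
  have hne : m ≠ b := by
    rintro rfl
    simp [hTD, hLGL] at hlt
  have haff : ∀ α ∈ Set.Icc (0:ℝ) 1, TD α ρb = TD 0 ρb + α * (TD 1 ρb - TD 0 ρb) := by
    rintro α ⟨h0, h1⟩
    rcases lt_or_gt_of_ne hne with h | h
    · have hg0 : g ≤ 0 := nonpos_of_mul_nonneg_left hg (sub_neg.2 h)
      have hL : ∀ x, LGL x = -(1 - x) * (b - m) := fun x => by
        rw [hLGL, max_eq_left (by linarith), max_eq_right (by linarith)]; ring
      have hT : ∀ x ≤ 1, TD x ρb = F + ρb * P + g - (1 - x) * (b - m) := fun x hx => by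
        have := mul_nonneg (sub_nonneg.2 hx) (sub_pos.2 h).le
        rw [hTD, hL, max_eq_left (by linarith)]; ring
      rw [hT α h1, hT 0 zero_le_one, hT 1 le_rfl]; ring
    · have hg0 : 0 ≤ g := nonneg_of_mul_nonneg_left hg (sub_pos.2 h)
      have hL : ∀ x, LGL x = x * (m - b) := fun x => by
        rw [hLGL, max_eq_right (by linarith), max_eq_left (by linarith)]; ring
      have hT : ∀ x, 0 ≤ x → TD x ρb = F + ρb * (P + g + x * (m - b)) := fun x hx => by
        have := mul_nonneg hx (sub_pos.2 h).le
        rw [hTD, hL, max_eq_right (by linarith)]; ring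
      rw [hT α h0, hT 0 le_rfl, hT 1 zero_le_one]; ring
  have hd : 0 < TD 1 ρb - TD 0 ρb := sub_pos.2 hlt
  have hmem : αstar ∈ Set.Ioc (0:ℝ) 1 := by
    rw [hαstar]
    constructor
    · exact div_pos (sub_pos.2 ((lt_div_iff₀' hpr0).2 hlo)) hd
    · exact (div_le_one hd).2 (sub_le_sub_right ((div_le_iff₀' hpr0).2 hhi) _)
  refine ⟨hne, hlt, hmem, ?_, ?_⟩
  · rw [haff αstar ⟨hmem.1.le, hmem.2⟩, hαstar, div_mul_cancel₀ _ hd.ne', add_sub_cancel,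
      mul_div_cancel₀ _ hpr0.ne']
  · intro α hα h
    rw [hαstar, eq_div_iff hd.ne', ← h, mul_div_cancel_left₀ _ hpr0.ne', haff α hα]
    ring
end

section
/- The standard-formula aggregation of the market SCR is discontinuous where the upward and downward interest-rate SCRs cross: for any e > 0 and m > 0, SCR_mkt(e, m, m) = √(e² + m²), while the limit of SCR_mkt(e, m, m+δ) as δ → 0⁺ equals √(e² + m² + e·m) > √(e² + m²); hence (u,d) ↦ SCR_mkt(e,u,d) is not continuous at (m,m). -/
/-!
On the diagonal `u = d` the correlation is `0`, whereas along `δ ↦ (m, m + δ)` with `δ > 0` it is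
`1/2`, so there the aggregate equals the continuous function `√(e² + (m+δ)² + e(m+δ))` of `δ`. Its
limit at `0⁺` exceeds the value at `(m, m)` because `e * m > 0`; continuity at `(m, m)` would force
the two to agree by uniqueness of limits.
-/

/-- The standard-formula aggregation of the market SCR is discontinuous
where the upward and downward interest-rate SCRs cross: for any `e > 0` and `m > 0`,
`SCR_mkt(e, m, m) = √(e² + m²)`, while the limit of `SCR_mkt(e, m, m+δ)` as `δ → 0⁺`
equals `√(e² + m² + e·m) > √(e² + m²)`; hence `(u,d) ↦ SCR_mkt(e,u,d)` is not
continuous at `(m,m)`. -/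
theorem stmt_18 (SCR : ℝ → ℝ → ℝ → ℝ)
    (hSCR : ∀ e u d, SCR e u d =
      Real.sqrt (e ^ 2 + (max u d) ^ 2 +
        2 * (if d > u then (1:ℝ) / 2 else 0) * e * max u d))
    (e m : ℝ) (he : 0 < e) (hm : 0 < m) :
    SCR e m m = Real.sqrt (e ^ 2 + m ^ 2) ∧
    Filter.Tendsto (fun δ => SCR e m (m + δ)) (nhdsWithin 0 (Set.Ioi 0))
      (nhds (Real.sqrt (e ^ 2 + m ^ 2 + e * m))) ∧
    Real.sqrt (e ^ 2 + m ^ 2) < Real.sqrt (e ^ 2 + m ^ 2 + e * m) ∧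
    ¬ ContinuousAt (fun p : ℝ × ℝ => SCR e p.1 p.2) (m, m) := by
  have h1 : SCR e m m = Real.sqrt (e ^ 2 + m ^ 2) := by
    rw [hSCR]; simp
  have h2 : Filter.Tendsto (fun δ => SCR e m (m + δ)) (nhdsWithin 0 (Set.Ioi 0))
      (nhds (Real.sqrt (e ^ 2 + m ^ 2 + e * m))) := by
    have hc : Continuous fun δ : ℝ => Real.sqrt (e ^ 2 + (m + δ) ^ 2 + e * (m + δ)) := by
      fun_prop
    have ht := (hc.tendsto 0).mono_left (nhdsWithin_le_nhds (s := Set.Ioi 0))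
    simp only [add_zero] at ht
    refine ht.congr' ?_
    filter_upwards [self_mem_nhdsWithin] with δ hδ
    have hlt : m < m + δ := lt_add_of_pos_right m hδ
    rw [hSCR, max_eq_right hlt.le, if_pos hlt]
    congr 1
    ring
  have h3 : Real.sqrt (e ^ 2 + m ^ 2) < Real.sqrt (e ^ 2 + m ^ 2 + e * m) :=
    Real.sqrt_lt_sqrt (by positivity) (lt_add_of_pos_right _ (mul_pos he hm))
  refine ⟨h1, h2, h3, fun hcont => ?_⟩
  have hpath : Filter.Tendsto (fun δ : ℝ => (m, m + δ)) (nhdsWithin 0 (Set.Ioi 0))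
      (nhds (m, m)) := by
    have hc : Continuous fun δ : ℝ => (m, m + δ) := by fun_prop
    have ht := (hc.tendsto 0).mono_left (nhdsWithin_le_nhds (s := Set.Ioi 0))
    simpa only [add_zero] using ht
  have h4 : Filter.Tendsto (fun δ => SCR e m (m + δ)) (nhdsWithin 0 (Set.Ioi 0))
      (nhds (SCR e m m)) := hcont.tendsto.comp hpath
  exact h3.ne (h1.symm.trans (tendsto_nhds_unique h4 h2))
end
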